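/- Let d ≥ 1 and let n : ℝ^d → ℝ be a C^∞ function with n(x) > 0 for every x. Then for every x ∈ ℝ^d and every index i ∈ {1,…,d}, n(x) · ∂_i( (Δ√n)/√n )(x) = ∂_i( Σ_{j=1}^d ∂_j( √n · ∂_j √n ) )(x) − 2 Σ_{j=1}^d ∂_j( ∂_j √n · ∂_i √n )(x); that is, n ∇( Δ√n / √n ) = ∇( div( √n ∇√n ) ) − 2 div( ∇√n ⊗ ∇√n ) pointwise. -/

import Mathlib

/-- The `i`-th partial derivative of `f : ℝ^d → ℝ`. -/
noncomputable def pd {d : ℕ} (i : Fin d) (f : (Fin d → ℝ) → ℝ) (x : Fin d → ℝ) : ℝ :=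
  fderiv ℝ f x (Pi.single i 1)

lemma pd_smooth {d : ℕ} (i : Fin d) {f : (Fin d → ℝ) → ℝ} (hf : ContDiff ℝ (⊤ : ℕ∞) f) :
    ContDiff ℝ (⊤ : ℕ∞) (pd i f) := by
  unfold pd
  exact (hf.fderiv_right (m := (⊤ : ℕ∞)) (by exact le_rfl)).clm_apply contDiff_const

lemma smooth_diffAt {d : ℕ} {f : (Fin d → ℝ) → ℝ} (hf : ContDiff ℝ (⊤ : ℕ∞) f)
    (x : Fin d → ℝ) : DifferentiableAt ℝ f x :=
  (hf.differentiable (by simp)) x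

lemma pd_mul {d : ℕ} (i : Fin d) {f g : (Fin d → ℝ) → ℝ} (x : Fin d → ℝ)
    (hf : DifferentiableAt ℝ f x) (hg : DifferentiableAt ℝ g x) :
    pd i (fun y => f y * g y) x = pd i f x * g x + f x * pd i g x := by
  unfold pd
  rw [fderiv_fun_mul hf hg]
  simp
  ring

lemma pd_add {d : ℕ} (i : Fin d) {f g : (Fin d → ℝ) → ℝ} (x : Fin d → ℝ)
    (hf : DifferentiableAt ℝ f x) (hg : DifferentiableAt ℝ g x) :
    pd i (fun y => f y + g y) x = pd i f x + pd i g x := by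
  unfold pd
  rw [fderiv_fun_add hf hg]
  simp

lemma pd_sum {d : ℕ} (i : Fin d) {f : Fin d → (Fin d → ℝ) → ℝ} (x : Fin d → ℝ)
    (hf : ∀ j, DifferentiableAt ℝ (f j) x) :
    pd i (fun y => ∑ j, f j y) x = ∑ j, pd i (f j) x := by
  unfold pd
  rw [fderiv_fun_sum (fun j _ => hf j)]
  simp

lemma pd_comm {d : ℕ} (i j : Fin d) {f : (Fin d → ℝ) → ℝ} (hf : ContDiff ℝ (⊤ : ℕ∞) f)
    (x : Fin d → ℝ) : pd i (pd j f) x = pd j (pd i f) x := by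
  have hd : DifferentiableAt ℝ (fderiv ℝ f) x :=
    ((hf.fderiv_right (m := (⊤ : ℕ∞)) (by exact le_rfl)).differentiable (by simp)) x
  have key : ∀ a b : Fin d, pd a (pd b f) x
      = fderiv ℝ (fderiv ℝ f) x (Pi.single a 1) (Pi.single b 1) := by
    intro a b
    unfold pd
    rw [fderiv_clm_apply hd (differentiableAt_const _)]
    simp
  rw [key, key]
  have hs : IsSymmSndFDerivAt ℝ f x :=
    hf.contDiffAt.isSymmSndFDerivAt (by simp; exact WithTop.coe_le_coe.2 (le_top : (2 : ℕ∞) ≤ ⊤))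
  exact hs _ _

lemma quantum_aux {d : ℕ} (s : (Fin d → ℝ) → ℝ) (hs : ContDiff ℝ (⊤ : ℕ∞) s)
    (hpos : ∀ x, 0 < s x) (x : Fin d → ℝ) (i : Fin d) :
    s x ^ 2 * pd i (fun y => (∑ j : Fin d, pd j (pd j s) y) / s y) x
      = pd i (fun y => ∑ j : Fin d, pd j (fun z => s z * pd j s z) y) x
        - 2 * ∑ j : Fin d, pd j (fun y => pd j s y * pd i s y) x := by
  have D : ∀ {f : (Fin d → ℝ) → ℝ}, ContDiff ℝ (⊤ : ℕ∞) f → ∀ x, DifferentiableAt ℝ f x :=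
    fun hf x => smooth_diffAt hf x
  have h1 : ∀ j, ContDiff ℝ (⊤ : ℕ∞) (pd j s) := fun j => pd_smooth j hs
  have h2 : ∀ j, ContDiff ℝ (⊤ : ℕ∞) (pd j (pd j s)) := fun j => pd_smooth j (h1 j)
  have hL : ContDiff ℝ (⊤ : ℕ∞) (fun y => ∑ j : Fin d, pd j (pd j s) y) :=
    ContDiff.sum (fun j _ => h2 j)
  have hQ : ContDiff ℝ (⊤ : ℕ∞) (fun y => (∑ j : Fin d, pd j (pd j s) y) / s y) :=
    hL.div hs (fun y => (hpos y).ne')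
  have e0 : pd i (fun y => ∑ j : Fin d, pd j (pd j s) y) x
      = ∑ j, pd i (pd j (pd j s)) x := pd_sum i x (fun j => D (h2 j) x)
  have eQ : (fun y => ∑ j : Fin d, pd j (pd j s) y)
      = fun y => ((∑ j : Fin d, pd j (pd j s) y) / s y) * s y := by
    funext y
    rw [div_mul_cancel₀ _ (hpos y).ne']
  have e1 := e0
  rw [eQ, pd_mul i x (D hQ x) (D hs x)] at e1
  have e2 : (fun y => ∑ j : Fin d, pd j (fun z => s z * pd j s z) y)
      = fun y => ∑ j : Fin d, (pd j s y * pd j s y + s y * pd j (pd j s) y) := by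
    funext y
    exact Finset.sum_congr rfl (fun j _ => pd_mul j y (D hs y) (D (h1 j) y))
  have e3 : pd i (fun y => ∑ j : Fin d, (pd j s y * pd j s y + s y * pd j (pd j s) y)) x
      = ∑ j : Fin d, (2 * (pd j s x * pd j (pd i s) x) + pd i s x * pd j (pd j s) x
          + s x * pd i (pd j (pd j s)) x) := by
    rw [pd_sum i x (fun j => D (((h1 j).mul (h1 j)).add (hs.mul (h2 j))) x)]
    refine Finset.sum_congr rfl (fun j _ => ?_)
    rw [pd_add i x (D ((h1 j).mul (h1 j)) x) (D (hs.mul (h2 j)) x),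
      pd_mul i x (D (h1 j) x) (D (h1 j) x), pd_mul i x (D hs x) (D (h2 j) x),
      pd_comm i j hs]
    ring
  have e4 : ∑ j : Fin d, pd j (fun y => pd j s y * pd i s y) x
      = ∑ j : Fin d, (pd j (pd j s) x * pd i s x + pd j s x * pd j (pd i s) x) :=
    Finset.sum_congr rfl (fun j _ => pd_mul j x (D (h1 j) x) (D (h1 i) x))
  rw [e2, e3, e4]
  simp only [Finset.sum_add_distrib, ← Finset.mul_sum, ← Finset.sum_mul]
  rw [← e1]
  have := (hpos x).ne'
  field_simp
  ring

/-- For smooth positive `n : ℝ^d → ℝ`: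
`n ∇(Δ√n/√n) = ∇(div(√n ∇√n)) − 2 div(∇√n ⊗ ∇√n)` pointwise. -/
theorem quantum_term_rewrite (d : ℕ) (hd : 1 ≤ d) (n : (Fin d → ℝ) → ℝ)
    (hn : ContDiff ℝ (⊤ : ℕ∞) n) (hpos : ∀ x, 0 < n x) :
    ∀ (x : Fin d → ℝ) (i : Fin d),
      n x * pd i (fun y =>
          (∑ j : Fin d, pd j (pd j (fun z => Real.sqrt (n z))) y) / Real.sqrt (n y)) x
        = pd i (fun y => ∑ j : Fin d,
              pd j (fun z => Real.sqrt (n z) * pd j (fun w => Real.sqrt (n w)) z) y) x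
          - 2 * ∑ j : Fin d,
              pd j (fun y =>
                pd j (fun z => Real.sqrt (n z)) y * pd i (fun z => Real.sqrt (n z)) y) x := by
  intro x i
  have hs : ContDiff ℝ (⊤ : ℕ∞) (fun z => Real.sqrt (n z)) := hn.sqrt (fun y => (hpos y).ne')
  have h := quantum_aux (fun z => Real.sqrt (n z)) hs (fun y => Real.sqrt_pos.2 (hpos y)) x i
  rw [Real.sq_sqrt (hpos x).le] at h
  exact h
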